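/- Let f be a homeomorphism of 𝕋^d homotopic to the identity with lift F, and let K ⊆ 𝕋^d be a nonempty compact f-invariant set (not necessarily minimal). Suppose there exist v ∈ ℤ^d \ {0} with gcd(v₁,…,v_d) = 1 and ρ₀ ∈ ℝ \ ℚ such that ρ_K(F) ⊆ (ρ₀/‖v‖²)·v + {v}^⊥ and f has bounded mean motion parallel to v on K. Then there exists a Borel measurable map h : K → 𝕋¹ satisfying h∘f = r_{ρ₀}∘h on K, where r_{ρ₀} : 𝕋¹ → 𝕋¹, x ↦ x + ρ₀ mod 1 (a 'measurable semi-conjugacy'). -/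

import Mathlib

open Filter Topology

local notation "⟪" x ", " y "⟫" => @inner ℝ _ _ x y

noncomputable section

/-- Euclidean space `ℝ^d`. -/
abbrev Rd (d : ℕ) := EuclideanSpace ℝ (Fin d)

/-- The `d`-torus `𝕋^d = ℝ^d/ℤ^d`, realized as a product of circles. -/
abbrev Torus (d : ℕ) := Fin d → AddCircle (1 : ℝ)

/-- The quotient map `π : ℝ^d → 𝕋^d`. -/
def projT {d : ℕ} (z : Rd d) : Torus d := fun i => (z i : AddCircle (1 : ℝ))

/-- An integer vector viewed as an element of `ℝ^d`. -/
def intVec {d : ℕ} (m : Fin d → ℤ) : Rd d := WithLp.toLp 2 (fun i => (m i : ℝ))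

/-- A real vector viewed as an element of `ℝ^k`. -/
def vecR {k : ℕ} (ρ : Fin k → ℝ) : Rd k := WithLp.toLp 2 (fun i => ρ i)

/-- `F : ℝ^d → ℝ^d` is a lift of `f : 𝕋^d → 𝕋^d`:  `π ∘ F = f ∘ π` and
`F (z + m) = F z + m` for every integer vector `m`.  The existence of such a lift
expresses that `f` is homotopic to the identity. -/
def IsLift {d : ℕ} (f : Torus d ≃ₜ Torus d) (F : Rd d ≃ₜ Rd d) : Prop :=
  (∀ z : Rd d, projT (F z) = f (projT z)) ∧
  ∀ (z : Rd d) (m : Fin d → ℤ), F (z + intVec m) = F z + intVec m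

/-- The `n`-th iterate (`n ∈ ℤ`) of a homeomorphism. -/
def iterZ {X : Type*} [TopologicalSpace X] (F : X ≃ₜ X) (n : ℤ) : X → X := ⇑(F.toEquiv ^ n)

/-- The rotation set of `F` on `K`:  all limits `(F^{nᵢ} xᵢ − xᵢ)/nᵢ → ρ` with
`nᵢ ↗ ∞` and `xᵢ ∈ π⁻¹(K)`. -/
def rotSetOn {d : ℕ} (F : Rd d ≃ₜ Rd d) (K : Set (Torus d)) : Set (Rd d) :=
  {ρ | ∃ (n : ℕ → ℕ) (x : ℕ → Rd d), StrictMono n ∧ (∀ i, projT (x i) ∈ K) ∧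
    Tendsto (fun i => (n i : ℝ)⁻¹ • ((⇑F)^[n i] (x i) - x i)) atTop (𝓝 ρ)}

/-- The affine hyperplane `lam • v + {v}^⊥`. -/
def affHyp {d : ℕ} (v : Rd d) (lam : ℝ) : Set (Rd d) :=
  {w | ∃ u : Rd d, ⟪u, v⟫ = 0 ∧ w = lam • v + u}

/-- Bounded mean motion parallel to `v` on `K`:  `|⟨Fⁿ z − z − n ρ, v⟩| ≤ c` for all
`n ∈ ℤ` and `z ∈ π⁻¹(K)`, where `ρ = lam • v` is a point of the hyperplane
`lam • v + {v}^⊥` containing the rotation set (the value of the inner product does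
not depend on the choice of `ρ` in this hyperplane). -/
def BddMeanMotionParallelOn {d : ℕ} (F : Rd d ≃ₜ Rd d) (v : Rd d) (lam : ℝ)
    (K : Set (Torus d)) : Prop :=
  ∃ c : ℝ, 0 < c ∧ ∀ (n : ℤ) (z : Rd d), projT z ∈ K →
    |⟪iterZ F n z - z - (n : ℝ) • (lam • v), v⟫| ≤ c

/-!
Let `ψ z = ⟪z, v⟫`. Along each orbit over `K` the deviations `ψ (Fⁿ z) - n ρ₀` are bounded, so
their supremum `S z` over `n ∈ ℤ` is finite. Reindexing the supremum gives `S (F z) = S z + ρ₀`.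
Since `F` commutes with integer translations and `⟪m, v⟫ ∈ ℤ` for `m ∈ ℤ^d`, the class of `S z`
modulo `1` depends only on the projection of `z` to the torus; this class is the semi-conjugacy.
It is only measurable because a supremum of continuous functions need not be continuous.
-/

section OrbitSup

variable {X : Type*}

/-- The deviation at time `n` of the observable `ψ` along the `F`-orbit of `x` from motion at the
constant speed `ρ`. -/
def orbitDeviation (F : Equiv.Perm X) (ψ : X → ℝ) (ρ : ℝ) (x : X) (n : ℤ) : ℝ :=
  ψ ((F ^ n) x) - n * ρ

/-- The supremum over the whole two-sided `F`-orbit of `x` of the deviation of `ψ` from motion at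
speed `ρ`; it has the junk value `0` where the deviation is unbounded above. -/
def orbitSup (F : Equiv.Perm X) (ψ : X → ℝ) (ρ : ℝ) (x : X) : ℝ :=
  ⨆ n : ℤ, orbitDeviation F ψ ρ x n

variable {F : Equiv.Perm X} {ψ : X → ℝ} {ρ : ℝ} {x : X}

lemma orbitDeviation_apply_self (n : ℤ) :
    orbitDeviation F ψ ρ (F x) n = orbitDeviation F ψ ρ x (n + 1) + ρ := by
  rw [orbitDeviation, orbitDeviation, zpow_add_one, Equiv.Perm.mul_apply]
  push_cast
  ring

lemma orbitDeviation_apply_of_commute {T : Equiv.Perm X} (hT : Commute F T) {a : ℝ}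
    (hψ : ∀ y, ψ (T y) = ψ y + a) (n : ℤ) :
    orbitDeviation F ψ ρ (T x) n = orbitDeviation F ψ ρ x n + a := by
  have hTn : (F ^ n) (T x) = T ((F ^ n) x) := DFunLike.congr_fun (hT.zpow_left n).eq x
  rw [orbitDeviation, orbitDeviation, hTn, hψ, sub_add_eq_add_sub]

lemma orbitSup_apply_self (hx : BddAbove (Set.range (orbitDeviation F ψ ρ x))) :
    orbitSup F ψ ρ (F x) = orbitSup F ψ ρ x + ρ :=
  calc ⨆ n, orbitDeviation F ψ ρ (F x) n
      = ⨆ n, (orbitDeviation F ψ ρ x (n + 1) + ρ) := iSup_congr orbitDeviation_apply_self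
    _ = ⨆ n, (orbitDeviation F ψ ρ x n + ρ) :=
      (Equiv.addRight (1 : ℤ)).iSup_comp (g := fun n => orbitDeviation F ψ ρ x n + ρ)
    _ = (⨆ n, orbitDeviation F ψ ρ x n) + ρ := (ciSup_add hx ρ).symm

lemma orbitSup_apply_of_commute (hx : BddAbove (Set.range (orbitDeviation F ψ ρ x)))
    {T : Equiv.Perm X} (hT : Commute F T) {a : ℝ} (hψ : ∀ y, ψ (T y) = ψ y + a) :
    orbitSup F ψ ρ (T x) = orbitSup F ψ ρ x + a :=
  calc ⨆ n, orbitDeviation F ψ ρ (T x) n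
      = ⨆ n, (orbitDeviation F ψ ρ x n + a) :=
        iSup_congr (orbitDeviation_apply_of_commute hT hψ)
    _ = (⨆ n, orbitDeviation F ψ ρ x n) + a := (ciSup_add hx a).symm

lemma measurable_orbitSup [MeasurableSpace X] (hF : ∀ n : ℤ, Measurable ⇑(F ^ n))
    (hψ : Measurable ψ) : Measurable (orbitSup F ψ ρ) :=
  .iSup fun n => (hψ.comp (hF n)).sub_const (n * ρ)

end OrbitSup

lemma continuous_iterZ {X : Type*} [TopologicalSpace X] (F : X ≃ₜ X) (n : ℤ) :
    Continuous (iterZ F n) := by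
  let toPerm : (X ≃ₜ X) →* Equiv.Perm X :=
    { toFun := Homeomorph.toEquiv, map_one' := rfl, map_mul' := fun _ _ => rfl }
  have hFn : ⇑(F ^ n) = iterZ F n := congrArg DFunLike.coe (map_zpow toPerm F n)
  exact hFn ▸ (F ^ n).continuous

section Torus

variable {d : ℕ}

/-- The right inverse of `projT` taking values in the fundamental domain `[0, 1)^d`, used to descend
functions measurably from `ℝ^d` to the torus. -/
def torusSection (x : Torus d) : Rd d :=
  WithLp.toLp 2 fun i => (AddCircle.equivIco (1 : ℝ) 0 (x i) : ℝ)

lemma projT_torusSection (x : Torus d) : projT (torusSection x) = x :=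
  funext fun _ => AddCircle.coe_equivIco

lemma measurable_torusSection : Measurable (torusSection (d := d)) := by
  refine (MeasurableEquiv.toLp 2 (Fin d → ℝ)).measurable.comp (measurable_pi_lambda _ fun i => ?_)
  exact measurable_subtype_coe.comp
    ((AddCircle.measurableEquivIco (1 : ℝ) 0).measurable.comp (measurable_pi_apply i))

lemma intVec_ne_zero {m : Fin d → ℤ} (hm : m ≠ 0) : intVec m ≠ 0 := fun h =>
  hm <| funext fun i => Int.cast_eq_zero.1 (congrArg (· i) h)

lemma inner_intVec_intVec (m v : Fin d → ℤ) :
    ⟪intVec m, intVec v⟫ = ((∑ i, m i * v i : ℤ) : ℝ) := by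
  simp [intVec, PiLp.inner_apply, mul_comm]

lemma exists_eq_add_intVec_of_projT_eq {z w : Rd d} (h : projT z = projT w) :
    ∃ m : Fin d → ℤ, z = w + intVec m := by
  have hcoord (i : Fin d) : ∃ n : ℤ, z i = w i + n := by
    obtain ⟨n, hn⟩ := QuotientAddGroup.eq_iff_sub_mem.1 (congrFun h i)
    exact ⟨n, by simpa [sub_eq_iff_eq_add'] using hn.symm⟩
  choose m hm using hcoord
  exact ⟨m, PiLp.ext hm⟩

lemma coe_orbitSup_eq_of_projT_eq {F : Equiv.Perm (Rd d)}
    (hF : ∀ (z : Rd d) (m : Fin d → ℤ), F (z + intVec m) = F z + intVec m) {v : Fin d → ℤ}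
    {ρ : ℝ} {z w : Rd d}
    (hw : BddAbove (Set.range (orbitDeviation F (fun y => ⟪y, intVec v⟫) ρ w)))
    (hzw : projT z = projT w) :
    (orbitSup F (fun y => ⟪y, intVec v⟫) ρ z : AddCircle (1 : ℝ)) =
      orbitSup F (fun y => ⟪y, intVec v⟫) ρ w := by
  obtain ⟨m, rfl⟩ := exists_eq_add_intVec_of_projT_eq hzw
  have hcomm : Commute F (Equiv.addRight (intVec m)) := Equiv.ext fun y => hF y m
  have hsup := orbitSup_apply_of_commute hw hcomm fun y => inner_add_left y (intVec m) (intVec v)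
  rw [Equiv.coe_addRight, inner_intVec_intVec] at hsup
  rw [hsup, AddCircle.coe_add, add_eq_left]
  exact (AddCircle.coe_eq_zero_iff 1).2 ⟨_, zsmul_one _⟩

lemma BddMeanMotionParallelOn.bddAbove_orbitDeviation {F : Rd d ≃ₜ Rd d} {v : Rd d} {lam : ℝ}
    {K : Set (Torus d)} (h : BddMeanMotionParallelOn F v lam K) {z : Rd d} (hz : projT z ∈ K) :
    BddAbove (Set.range (orbitDeviation F.toEquiv (fun y => ⟪y, v⟫) (lam * ‖v‖ ^ 2) z)) := by
  obtain ⟨c, -, hc⟩ := h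
  refine ⟨c + ⟪z, v⟫, Set.forall_mem_range.2 fun n => ?_⟩
  have hn : ⟪iterZ F n z, v⟫ - ⟪z, v⟫ - n * (lam * ‖v‖ ^ 2) ≤ c := by
    simpa only [inner_sub_left, real_inner_smul_left, real_inner_self_eq_norm_sq]
      using (abs_le.1 (hc n z hz)).2
  change ⟪iterZ F n z, v⟫ - n * (lam * ‖v‖ ^ 2) ≤ c + ⟪z, v⟫
  linarith

end Torus

theorem statement19_general {d : ℕ} {f : Torus d ≃ₜ Torus d} {F : Rd d ≃ₜ Rd d} (hF : IsLift f F)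
    {K : Set (Torus d)} {v : Fin d → ℤ} {ρ₀ : ℝ}
    (hbdd : ∀ z, projT z ∈ K →
      BddAbove (Set.range (orbitDeviation F.toEquiv (fun y => ⟪y, intVec v⟫) ρ₀ z))) :
    ∃ h : Torus d → AddCircle (1 : ℝ), Measurable h ∧
      ∀ x ∈ K, h (f x) = h x + (ρ₀ : AddCircle (1 : ℝ)) := by
  let S : Rd d → ℝ := orbitSup F.toEquiv (fun y => ⟪y, intVec v⟫) ρ₀
  have hS : Measurable S := measurable_orbitSup (fun n => (continuous_iterZ F n).measurable)
    (measurable_id.inner measurable_const)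
  refine ⟨fun x => (S (torusSection x) : AddCircle (1 : ℝ)),
    AddCircle.measurable_mk'.comp (hS.comp measurable_torusSection), fun x hx => ?_⟩
  have hsec : projT (torusSection x) ∈ K := by rwa [projT_torusSection]
  obtain ⟨w, hw⟩ := F.surjective (torusSection (f x))
  have hwx : projT w = x := f.injective (by rw [← hF.1, hw, projT_torusSection])
  calc (S (torusSection (f x)) : AddCircle (1 : ℝ))
      = ((S w + ρ₀ : ℝ) : AddCircle (1 : ℝ)) := by
        rw [← hw]
        exact congrArg _ (orbitSup_apply_self (hbdd w (hwx ▸ hx)))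
    _ = S w + ρ₀ := AddCircle.coe_add 1 _ _
    _ = S (torusSection x) + ρ₀ := by
        rw [coe_orbitSup_eq_of_projT_eq hF.2 (hbdd _ hsec) (hwx.trans (projT_torusSection x).symm)]

/-- **Remark 2.3.**  Even without minimality, a compact invariant set `K` whose
rotation set lies in the hyperplane `(ρ₀/‖v‖²) v + {v}^⊥` (with `v` an integer vector
with coprime coordinates and `ρ₀` irrational), together with bounded mean motion
parallel to `v` on `K`, yields a measurable semi-conjugacy from `f|_K` to the
irrational rotation `r_{ρ₀}`. -/
theorem statement19 {d : ℕ} (f : Torus d ≃ₜ Torus d) (F : Rd d ≃ₜ Rd d) (hF : IsLift f F)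
    (K : Set (Torus d)) (hKne : K.Nonempty) (hKc : IsCompact K) (hKinv : f '' K = K)
    (v : Fin d → ℤ) (hv : v ≠ 0) (hgcd : Finset.univ.gcd v = 1)
    (ρ₀ : ℝ) (hρ₀ : Irrational ρ₀)
    (hrot : rotSetOn F K ⊆ affHyp (intVec v) (ρ₀ / ‖intVec v‖ ^ 2))
    (hbmm : BddMeanMotionParallelOn F (intVec v) (ρ₀ / ‖intVec v‖ ^ 2) K) :
    ∃ h : Torus d → AddCircle (1 : ℝ), Measurable h ∧
      ∀ x ∈ K, h (f x) = h x + (ρ₀ : AddCircle (1 : ℝ)) := by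
  have hnorm : ‖intVec v‖ ^ 2 ≠ 0 := pow_ne_zero 2 (norm_ne_zero_iff.2 (intVec_ne_zero hv))
  exact statement19_general hF fun z hz =>
    div_mul_cancel₀ ρ₀ hnorm ▸ hbmm.bddAbove_orbitDeviation hz
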